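/- There exists an absolute constant c > 0 such that if the constant c₀ in the definition of k* satisfies c₀ ≥ c, then for a random matrix X ∈ ℝ^{n×p} (p ≥ n) with i.i.d. N(0,Σ) rows, where Σ has rank at least n, with probability at least 1 − 2e^{−n} the smallest singular value of X satisfies σ_n(X) ≥ √(r_{k*}(Σ)) / 4. -/

import Mathlib

open MeasureTheory ProbabilityTheory Matrix Finset
open scoped ENNReal Classical

noncomputable section

/-- Euclidean (`ℓ2`) norm of a finite real vector. -/
def enorm2 {m : ℕ} (v : Fin m → ℝ) : ℝ := Real.sqrt (∑ i, v i ^ 2)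

/-- The prediction (semi-)norm `‖Σ^{1/2} d‖₂ = √(dᵀ Σ d)`. -/
def predNorm {p : ℕ} (Sig : Matrix (Fin p) (Fin p) ℝ) (d : Fin p → ℝ) : ℝ :=
  Real.sqrt (d ⬝ᵥ Sig.mulVec d)

/-- The standard Gaussian measure `N(0, I_p)` on `ℝ^p`. -/
def stdGaussian (p : ℕ) : Measure (Fin p → ℝ) :=
  Measure.pi fun _ : Fin p => gaussianReal 0 1

/-- `Σ^{1/2} = P Λ^{1/2} Pᵀ` built from the eigendecomposition data. -/
def covHalf (p : ℕ) (lam : ℕ → ℝ) (Porth : Matrix (Fin p) (Fin p) ℝ) :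
    Matrix (Fin p) (Fin p) ℝ :=
  Porth * Matrix.diagonal (fun i : Fin p => Real.sqrt (lam ((i : ℕ) + 1))) * Porthᵀ

/-- The Gaussian law `N(0,Σ)` on `ℝ^p`, realized as the pushforward of `N(0,I_p)`
by `g ↦ Σ^{1/2} g`. -/
def mvGaussian (p : ℕ) (lam : ℕ → ℝ) (Porth : Matrix (Fin p) (Fin p) ℝ) :
    Measure (Fin p → ℝ) :=
  Measure.map (fun g => (covHalf p lam Porth).mulVec g) (stdGaussian p)

/-- `r_k(Σ) = ∑_{i=k}^p λ_i(Σ)` (eigenvalues `1`-indexed). -/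
def rsum (p : ℕ) (lam : ℕ → ℝ) (k : ℕ) : ℝ := ∑ i ∈ Finset.Icc k p, lam i

/-- The set `{k ∈ {1,…,p} : r_k(Σ)/λ_k(Σ) ≥ c₀ n}`. -/
def kstarSet (p : ℕ) (lam : ℕ → ℝ) (c0 : ℝ) (n : ℕ) : Set ℕ :=
  {k | 1 ≤ k ∧ k ≤ p ∧ c0 * n ≤ rsum p lam k / lam k}

/-- `k* = inf { k ∈ {1,…,p} : r_k(Σ)/λ_k(Σ) ≥ c₀ n }`. -/
def kstar (p : ℕ) (lam : ℕ → ℝ) (c0 : ℝ) (n : ℕ) : ℕ := sInf (kstarSet p lam c0 n)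

/-- `ρ = ‖β*‖₂ + 4‖ξ‖₂/√(r_{k*}(Σ))`. -/
def rho (p : ℕ) (lam : ℕ → ℝ) (c0 : ℝ) (n : ℕ) (βstar : Fin p → ℝ) (ξnorm : ℝ) : ℝ :=
  enorm2 βstar + 4 * ξnorm / Real.sqrt (rsum p lam (kstar p lam c0 n))

/-- `r*(η) = inf { r > 0 : ∑ᵢ min(λ_i(Σ), r²) ≤ η n r² }`. -/
def rstar (p n : ℕ) (lam : ℕ → ℝ) (η : ℝ) : ℝ :=
  sInf {r : ℝ | 0 < r ∧ ∑ i : Fin p, min (lam ((i : ℕ) + 1)) (r ^ 2) ≤ η * n * r ^ 2}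

/-- `r̄(γ) = sup { r > 0 : ∑ᵢ min(λ_i(Σ)ρ², r²) ≤ γ ‖ξ‖₂² }`. -/
def rbar (p : ℕ) (lam : ℕ → ℝ) (γ ρ ξnorm : ℝ) : ℝ :=
  sSup {r : ℝ | 0 < r ∧ ∑ i : Fin p, min (lam ((i : ℕ) + 1) * ρ ^ 2) (r ^ 2) ≤ γ * ξnorm ^ 2}

/-- `k̄ = inf { k ≥ k* : r_k(Σ) ≤ (γ/2) r_{k*}(Σ) }`, with `k̄ = p+1` if the set is empty. -/
def kbar (p : ℕ) (lam : ℕ → ℝ) (c0 : ℝ) (n : ℕ) (γ : ℝ) : ℕ :=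
  if _h : {k | kstar p lam c0 n ≤ k ∧
      rsum p lam k ≤ γ / 2 * rsum p lam (kstar p lam c0 n)}.Nonempty
  then sInf {k | kstar p lam c0 n ≤ k ∧
      rsum p lam k ≤ γ / 2 * rsum p lam (kstar p lam c0 n)}
  else p + 1

/-- `b` is a minimum `ℓ2`-norm interpolator for the design `M` and responses `Y`. -/
def IsMinInterp {n p : ℕ} (M : Fin n → Fin p → ℝ) (Y : Fin n → ℝ) (b : Fin p → ℝ) : Prop :=
  (∀ i, ∑ j, M i j * b j = Y i) ∧
    ∀ b' : Fin p → ℝ, (∀ i, ∑ j, M i j * b' j = Y i) → enorm2 b ≤ enorm2 b'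

/-- The smallest (`n`-th) singular value of an `n × p` design given as a function
`M : Fin n → Fin p → ℝ`: `σ_n(M) = inf_{‖x‖₂ = 1} ‖Mᵀ x‖₂`. -/
def sminFn {n p : ℕ} (M : Fin n → Fin p → ℝ) : ℝ :=
  sInf {s : ℝ | ∃ x : Fin n → ℝ, enorm2 x = 1 ∧
    s = enorm2 (fun j : Fin p => ∑ i, M i j * x i)}

/-!
For a unit vector `x`, the vector `Qᵀ Xᵀ x` has independent `N(0, λ_j)` coordinates, where `Q`
diagonalises `Σ`. Keeping only the coordinates with index at least `k*` can only decrease its norm.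
What remains is a sum of squares with mean `r_{k*}` in which no single variance dominates, since
`r_{k*} ≥ 256 n λ_{k*}`; by Chernoff's bound it stays within `r_{k*} / 2` of its mean except with
probability at most `2 e^{-4n}`. A `1/4`-net of the unit sphere of `ℝⁿ` has at most `9 ^ n ≤ e^{3n}`
points, so a union bound gives this simultaneously on the net, and approximating a unit vector by
a point of the net costs at most a constant factor.
-/

section Nets

open Metric Module
open scoped NNReal

variable {E F : Type*} [NormedAddCommGroup E] [NormedSpace ℝ E] [NormedAddCommGroup F]
  [NormedSpace ℝ F]

-- The balls of radius `ε / 2` around the points of `s` are disjoint and lie in the ball of radius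
-- `R + ε / 2`, so the bound is a comparison of volumes.
theorem card_le_of_isSeparated [FiniteDimensional ℝ E] {ε : ℝ≥0} (hε : 0 < ε) {R : ℝ}
    (hR : 0 ≤ R) {s : Finset E} (hs : (s : Set E) ⊆ closedBall 0 R)
    (hsep : IsSeparated ε (s : Set E)) : (#s : ℝ) ≤ (1 + 2 * R / ε) ^ finrank ℝ E := by
  borelize E
  let μ : Measure E := Measure.addHaar
  have hε2 : (0 : ℝ) < ε / 2 := by positivity
  have hdisj : (s : Set E).PairwiseDisjoint fun y => ball y (ε / 2) := fun x hx y hy hxy => by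
    have hlt : (ε : ℝ≥0∞) < edist x y := hsep hx hy hxy
    rw [edist_nndist, ENNReal.coe_lt_coe] at hlt
    exact ball_disjoint_ball (by rw [add_halves]; exact hlt.le)
  have hsub : ⋃ y ∈ s, ball y (ε / 2) ⊆ ball (0 : E) (R + ε / 2) :=
    Set.iUnion₂_subset fun y hy => ball_subset_ball' <| by linarith [mem_closedBall.1 (hs hy)]
  have hvol : #s * ENNReal.ofReal ((ε / 2) ^ finrank ℝ E) * μ (ball 0 1) ≤
      ENNReal.ofReal ((R + ε / 2) ^ finrank ℝ E) * μ (ball 0 1) :=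
    calc _ = μ (⋃ y ∈ s, ball y (ε / 2)) := by
          rw [measure_biUnion_finset hdisj fun _ _ => measurableSet_ball]
          simp only [μ.addHaar_ball_of_pos _ hε2, sum_const, nsmul_eq_mul, mul_assoc]
      _ ≤ μ (ball 0 (R + ε / 2)) := measure_mono hsub
      _ = _ := μ.addHaar_ball_of_pos _ (by positivity)
  rw [ENNReal.mul_le_mul_iff_left (measure_ball_pos _ _ one_pos).ne' measure_ball_lt_top.ne] at hvol
  have hreal : #s * (ε / 2 : ℝ) ^ finrank ℝ E ≤ (R + ε / 2) ^ finrank ℝ E := by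
    have := ENNReal.toReal_le_of_le_ofReal (by positivity) hvol
    rwa [ENNReal.toReal_mul, ENNReal.toReal_natCast, ENNReal.toReal_ofReal (by positivity)] at this
  have hratio : (R + ε / 2) / (ε / 2 : ℝ) = 1 + 2 * R / ε := by field_simp; ring
  rwa [← le_div_iff₀ (by positivity), ← div_pow, hratio] at hreal

theorem exists_finset_isCover_card_le [FiniteDimensional ℝ E] {ε : ℝ≥0} (hε : 0 < ε) {R : ℝ}
    (hR : 0 ≤ R) {A : Set E} (hA : A ⊆ closedBall 0 R) :
    ∃ s : Finset E, (s : Set E) ⊆ A ∧ IsCover ε A s ∧ (#s : ℝ) ≤ (1 + 2 * R / ε) ^ finrank ℝ E := by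
  have : ProperSpace E := FiniteDimensional.proper ℝ E
  obtain ⟨t, -, ht, hcov⟩ := exists_finite_isCover_of_totallyBounded (half_pos hε).ne'
    ((isCompact_closedBall (0 : E) R).totallyBounded.subset hA)
  have hpack : packingNumber ε A ≠ ⊤ := by
    rw [← mul_div_cancel₀ ε (two_ne_zero (α := ℝ≥0))]
    exact ((packingNumber_two_mul_le_externalCoveringNumber _ _).trans_lt
      (hcov.externalCoveringNumber_le_encard.trans_lt ht.encard_lt_top)).ne
  have hfin : (maximalSeparatedSet ε A).Finite := by
    rwa [← Set.encard_ne_top_iff, encard_maximalSeparatedSet hpack]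
  refine ⟨hfin.toFinset, ?_, ?_, card_le_of_isSeparated hε hR ?_ ?_⟩ <;> rw [hfin.coe_toFinset]
  exacts [maximalSeparatedSet_subset, isCover_maximalSeparatedSet hpack,
    maximalSeparatedSet_subset.trans hA, isSeparated_maximalSeparatedSet]

theorem exists_dist_le_of_isCover {X : Type*} [PseudoMetricSpace X] {ε : ℝ≥0} {A s : Set X}
    (hs : IsCover ε A s) {x : X} (hx : x ∈ A) : ∃ y ∈ s, dist x y ≤ ε := by
  obtain ⟨y, hy, hxy : edist x y ≤ ε⟩ := hs hx
  exact ⟨y, hy, by rwa [edist_nndist, ENNReal.coe_le_coe, ← NNReal.coe_le_coe, coe_nndist] at hxy⟩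

theorem opNorm_le_of_isCover_sphere {L : E →L[ℝ] F} {ε : ℝ≥0} (hε : ε < 1) {s : Set E}
    (hs : IsCover ε (sphere 0 1) s) {b : ℝ} (hb0 : 0 ≤ b) (hb : ∀ y ∈ s, ‖L y‖ ≤ b) :
    ‖L‖ ≤ b / (1 - ε) := by
  have hstep : ‖L‖ ≤ b + ε * ‖L‖ := by
    refine L.opNorm_le_of_unit_norm (by positivity) fun x hx => ?_
    obtain ⟨y, hy, hxy⟩ := exists_dist_le_of_isCover hs (mem_sphere_zero_iff_norm.2 hx)
    rw [dist_eq_norm] at hxy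
    calc ‖L x‖ = ‖L y + L (x - y)‖ := by rw [map_sub, add_sub_cancel]
      _ ≤ ‖L y‖ + ‖L (x - y)‖ := norm_add_le _ _
      _ ≤ b + ‖L‖ * ε := add_le_add (hb y hy) (L.le_opNorm_of_le hxy)
      _ = b + ε * ‖L‖ := by rw [mul_comm]
  rw [le_div_iff₀ (sub_pos.2 (by exact_mod_cast hε))]
  linarith

theorem sub_le_norm_apply_of_isCover_sphere {L : E →L[ℝ] F} {ε : ℝ≥0} (hε : ε < 1) {s : Set E}
    (hs : IsCover ε (sphere 0 1) s) {a b : ℝ} (hb0 : 0 ≤ b) (ha : ∀ y ∈ s, a ≤ ‖L y‖)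
    (hb : ∀ y ∈ s, ‖L y‖ ≤ b) {x : E} (hx : ‖x‖ = 1) : a - b / (1 - ε) * ε ≤ ‖L x‖ := by
  obtain ⟨y, hy, hxy⟩ := exists_dist_le_of_isCover hs (mem_sphere_zero_iff_norm.2 hx)
  rw [dist_eq_norm] at hxy
  have hdiff : ‖L (x - y)‖ ≤ b / (1 - ε) * ε :=
    L.le_of_opNorm_le_of_le (opNorm_le_of_isCover_sphere hε hs hb0 hb) hxy
  have htri : ‖L y‖ - ‖L x‖ ≤ ‖L (x - y)‖ := by
    rw [map_sub, norm_sub_rev]; exact norm_sub_norm_le _ _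
  linarith [ha y hy]

end Nets

section RandomOperators

open Metric Module
open scoped NNReal

variable {E F : Type*} [NormedAddCommGroup E] [NormedSpace ℝ E] [NormedAddCommGroup F]
  [NormedSpace ℝ F]

-- `(2/3)² ≤ 1/2`, `3/2 ≤ (5/4)²` and `2/3 - (1/4) * (5/4) / (1 - 1/4) = 1/4`.
theorem sqrt_div_four_le_norm_apply_of_isCover_sphere {L : E →L[ℝ] F} {s : Set E}
    (hs : IsCover (1 / 4) (sphere 0 1) s) {r : ℝ} (h : ∀ y ∈ s, |‖L y‖ ^ 2 - r| < r / 2) {x : E}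
    (hx : ‖x‖ = 1) : √r / 4 ≤ ‖L x‖ := by
  have hr : ∀ y ∈ s, √r ^ 2 = r := fun y hy =>
    Real.sq_sqrt (by linarith [(abs_nonneg _).trans_lt (h y hy)])
  have hlower : ∀ y ∈ s, 2 / 3 * √r ≤ ‖L y‖ := fun y hy => by
    rw [← sq_le_sq₀ (by positivity) (norm_nonneg _), mul_pow, hr y hy]
    linarith [(abs_lt.1 (h y hy)).1, (abs_nonneg _).trans_lt (h y hy)]
  have hupper : ∀ y ∈ s, ‖L y‖ ≤ 5 / 4 * √r := fun y hy => by
    rw [← sq_le_sq₀ (norm_nonneg _) (by positivity), mul_pow, hr y hy]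
    linarith [(abs_lt.1 (h y hy)).2, (abs_nonneg _).trans_lt (h y hy)]
  refine le_of_eq_of_le ?_
    (sub_le_norm_apply_of_isCover_sphere (by norm_num) hs (by positivity) hlower hupper hx)
  push_cast
  ring

theorem measure_exists_norm_apply_lt_le [FiniteDimensional ℝ E] {Ω : Type*} [MeasurableSpace Ω]
    {P : Measure Ω} {A : Ω → E →L[ℝ] F} {r : ℝ} {t : ℝ≥0∞}
    (h : ∀ x, ‖x‖ = 1 → P {ω | r / 2 ≤ |‖A ω x‖ ^ 2 - r|} ≤ t) :
    P {ω | ∃ x, ‖x‖ = 1 ∧ ‖A ω x‖ < √r / 4} ≤ 9 ^ finrank ℝ E * t := by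
  obtain ⟨s, hsphere, hcover, hcard⟩ := exists_finset_isCover_card_le (E := E) (ε := 1 / 4)
    (by norm_num) zero_le_one sphere_subset_closedBall
  have hcard' : #s ≤ 9 ^ finrank ℝ E := by
    have h9 : (1 + 2 * 1 / (1 / 4 : ℝ≥0) : ℝ) = 9 := by norm_num
    rw [h9] at hcard
    exact_mod_cast hcard
  have hsub : {ω | ∃ x, ‖x‖ = 1 ∧ ‖A ω x‖ < √r / 4} ⊆
      ⋃ y ∈ s, {ω | r / 2 ≤ |‖A ω y‖ ^ 2 - r|} := by
    rintro ω ⟨x, hx, hlt⟩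
    by_contra hω
    simp only [Set.mem_iUnion, Set.mem_ofPred_eq, not_exists, not_le] at hω
    exact hlt.not_ge (sqrt_div_four_le_norm_apply_of_isCover_sphere hcover hω hx)
  calc P {ω | ∃ x, ‖x‖ = 1 ∧ ‖A ω x‖ < √r / 4}
      ≤ ∑ y ∈ s, P {ω | r / 2 ≤ |‖A ω y‖ ^ 2 - r|} :=
        (measure_mono hsub).trans (measure_biUnion_finset_le _ _)
    _ ≤ #s • t := sum_le_card_nsmul _ _ _ fun y hy => h y (mem_sphere_zero_iff_norm.1 (hsphere hy))
    _ ≤ 9 ^ finrank ℝ E * t := by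
        rw [nsmul_eq_mul]
        gcongr
        exact_mod_cast hcard'

theorem measure_exists_sqrt_sum_sq_lt_le_nine_pow_mul {ι κ Ω : Type*} [Fintype ι]
    [MeasurableSpace Ω] {P : Measure Ω} {Y : ι → Ω → κ → ℝ} {S : Finset κ} {r : ℝ} {t : ℝ≥0∞}
    (h : ∀ x : ι → ℝ, ∑ i, x i ^ 2 = 1 →
      P {ω | r / 2 ≤ |∑ j ∈ S, (∑ i, x i • Y i ω) j ^ 2 - r|} ≤ t) :
    P {ω | ∃ x : ι → ℝ, ∑ i, x i ^ 2 = 1 ∧ √(∑ j ∈ S, (∑ i, x i • Y i ω) j ^ 2) < √r / 4} ≤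
      9 ^ Fintype.card ι * t := by
  let A : Ω → EuclideanSpace ℝ ι →L[ℝ] EuclideanSpace ℝ S := fun ω =>
    (toEuclideanLin (Matrix.of fun (j : S) i => Y i ω j)).toContinuousLinearMap
  have hA : ∀ ω x, ‖A ω x‖ ^ 2 = ∑ j ∈ S, (∑ i, x i • Y i ω) j ^ 2 := fun ω x => by
    rw [EuclideanSpace.real_norm_sq_eq, ← sum_coe_sort S]
    simp [A, mulVec, dotProduct, mul_comm]
  have hunit : ∀ x : EuclideanSpace ℝ ι, ‖x‖ = 1 ↔ ∑ i, x i ^ 2 = 1 := fun x => by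
    rw [← EuclideanSpace.real_norm_sq_eq, pow_eq_one_iff_of_nonneg (norm_nonneg x) two_ne_zero]
  have hsub : {ω | ∃ x : ι → ℝ, ∑ i, x i ^ 2 = 1 ∧
      √(∑ j ∈ S, (∑ i, x i • Y i ω) j ^ 2) < √r / 4} ⊆ {ω | ∃ x, ‖x‖ = 1 ∧ ‖A ω x‖ < √r / 4} := by
    rintro ω ⟨x, hx, hlt⟩
    exact ⟨WithLp.toLp 2 x, (hunit _).2 hx, by rwa [← Real.sqrt_sq (norm_nonneg _), hA]⟩
  rw [← finrank_euclideanSpace (𝕜 := ℝ)]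
  refine (measure_mono hsub).trans (measure_exists_norm_apply_lt_le fun x hx => ?_)
  simp_rw [hA]
  exact h _ ((hunit x).1 hx)

end RandomOperators

section GaussianSquares

open scoped NNReal

theorem inv_sqrt_one_sub_le_exp {z : ℝ} (hz : z ≤ 1 / 2) :
    (√(1 - z))⁻¹ ≤ Real.exp (z / 2 + z ^ 2) := by
  have hpos : 0 < 1 - z := by linarith
  have hlog : -(z + 2 * z ^ 2) ≤ Real.log (1 - z) := by
    refine le_trans ?_ (Real.one_sub_inv_le_log_of_pos hpos)
    rw [← sub_nonneg]
    have : 1 - (1 - z)⁻¹ - -(z + 2 * z ^ 2) = z ^ 2 * (1 - 2 * z) / (1 - z) := by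
      field_simp
      ring
    rw [this]
    exact div_nonneg (mul_nonneg (sq_nonneg z) (by linarith)) hpos.le
  rw [← Real.exp_log (inv_pos.2 (Real.sqrt_pos.2 hpos)), Real.exp_le_exp, Real.log_inv,
    Real.log_sqrt hpos.le]
  linarith

theorem mgf_sq_gaussianReal {v : ℝ≥0} {u : ℝ} (hu : 2 * (u * v) < 1) :
    mgf (fun x => x ^ 2) (gaussianReal 0 v) u = (√(1 - 2 * (u * v)))⁻¹ := by
  rcases eq_or_ne v 0 with rfl | hv
  · simp [mgf]
  have : (0 : ℝ) < v := by positivity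
  have : 0 < 1 - 2 * (u * v) := by linarith
  have hdensity : ∀ x : ℝ, gaussianPDFReal 0 v x • Real.exp (u * x ^ 2) =
      (√(2 * Real.pi * v))⁻¹ * Real.exp (-((1 - 2 * (u * v)) / (2 * v)) * x ^ 2) := fun x => by
    rw [gaussianPDFReal, smul_eq_mul, mul_assoc, ← Real.exp_add]
    congr 2
    field_simp
    ring
  rw [mgf, integral_gaussianReal_eq_integral_smul hv]
  simp_rw [hdensity]
  rw [integral_const_mul, integral_gaussian, ← Real.sqrt_inv, ← Real.sqrt_inv,
    ← Real.sqrt_mul (by positivity)]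
  congr 1
  field_simp

section IndependentSquares

variable {Ω ι : Type*} [MeasurableSpace Ω] {P : Measure Ω} {Z : ι → Ω → ℝ} {v : ι → ℝ≥0}
  {S : Finset ι} {b u δ : ℝ}

theorem mgf_sum_sq (hind : iIndepFun Z P) (hlaw : ∀ j, HasLaw (Z j) (gaussianReal 0 (v j)) P)
    (hu : ∀ j ∈ S, 2 * (u * v j) < 1) :
    mgf (fun ω => ∑ j ∈ S, Z j ω ^ 2) P u = ∏ j ∈ S, (√(1 - 2 * (u * v j)))⁻¹ := by
  have hsq : iIndepFun (fun j ω => Z j ω ^ 2) P :=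
    hind.comp (fun _ x => x ^ 2) fun _ => by fun_prop
  rw [← Finset.sum_fn, hsq.mgf_sum₀ fun j => (hlaw j).aemeasurable.pow_const 2]
  refine prod_congr rfl fun j hj => ?_
  rw [← mgf_sq_gaussianReal (hu j hj), ← (hlaw j).map_eq,
    mgf_map (hlaw j).aemeasurable (by fun_prop)]
  rfl

theorem integrable_exp_mul_sum_sq (hind : iIndepFun Z P)
    (hlaw : ∀ j, HasLaw (Z j) (gaussianReal 0 (v j)) P) (hu : ∀ j ∈ S, 2 * (u * v j) < 1) :
    Integrable (fun ω => Real.exp (u * ∑ j ∈ S, Z j ω ^ 2)) P := by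
  by_contra hint
  have hmgf := mgf_sum_sq hind hlaw hu
  rw [mgf_undef hint] at hmgf
  exact (prod_pos fun j hj => inv_pos.2 (Real.sqrt_pos.2 (sub_pos.2 (hu j hj)))).ne hmgf

theorem mgf_sum_sq_le (hind : iIndepFun Z P) (hlaw : ∀ j, HasLaw (Z j) (gaussianReal 0 (v j)) P)
    (hb : ∀ j ∈ S, v j ≤ b) (hu : ∀ j ∈ S, u * v j ≤ 1 / 4) :
    mgf (fun ω => ∑ j ∈ S, Z j ω ^ 2) P u ≤
      Real.exp ((u + 4 * b * u ^ 2) * ∑ j ∈ S, (v j : ℝ)) := by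
  rw [mgf_sum_sq hind hlaw fun j hj => by linarith [hu j hj], mul_sum, Real.exp_sum]
  refine prod_le_prod (fun _ _ => by positivity) fun j hj => ?_
  refine (inv_sqrt_one_sub_le_exp (by linarith [hu j hj])).trans (Real.exp_le_exp.2 ?_)
  calc 2 * (u * v j) / 2 + (2 * (u * v j)) ^ 2 = (u + 4 * v j * u ^ 2) * v j := by ring
    _ ≤ (u + 4 * b * u ^ 2) * v j := by
      have := hb j hj
      gcongr

theorem div_mul_le_one_div_four (hb0 : 0 < b) (hb : ∀ j ∈ S, v j ≤ b) (hδ : δ ≤ 2) :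
    ∀ j ∈ S, δ / (8 * b) * v j ≤ 1 / 4 := fun j hj => by
  rw [div_mul_eq_mul_div, div_le_iff₀ (by positivity)]
  calc δ * v j ≤ 2 * v j := by gcongr
    _ ≤ 1 / 4 * (8 * b) := by linarith [hb j hj]

-- The Chernoff parameter `u = δ / (8 b)` minimises the exponent `-δ u + 4 b u²`.
theorem exp_mul_mgf_sum_sq_le (hind : iIndepFun Z P)
    (hlaw : ∀ j, HasLaw (Z j) (gaussianReal 0 (v j)) P) (hb0 : 0 < b) (hb : ∀ j ∈ S, v j ≤ b)
    (hδ : δ ≤ 2) :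
    Real.exp (-(δ / (8 * b)) * ((1 + δ) * ∑ j ∈ S, (v j : ℝ))) *
        mgf (fun ω => ∑ j ∈ S, Z j ω ^ 2) P (δ / (8 * b)) ≤
      Real.exp (-(δ ^ 2 * (∑ j ∈ S, (v j : ℝ)) / (16 * b))) := by
  refine (mul_le_mul_of_nonneg_left
    (mgf_sum_sq_le hind hlaw hb (div_mul_le_one_div_four hb0 hb hδ)) (by positivity)).trans_eq ?_
  rw [← Real.exp_add]
  congr 1
  field_simp
  ring

theorem measureReal_one_add_mul_le_sum_sq_le (hind : iIndepFun Z P)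
    (hlaw : ∀ j, HasLaw (Z j) (gaussianReal 0 (v j)) P) (hb0 : 0 < b) (hb : ∀ j ∈ S, v j ≤ b)
    (hδ0 : 0 ≤ δ) (hδ2 : δ ≤ 2) :
    P.real {ω | (1 + δ) * ∑ j ∈ S, (v j : ℝ) ≤ ∑ j ∈ S, Z j ω ^ 2} ≤
      Real.exp (-(δ ^ 2 * (∑ j ∈ S, (v j : ℝ)) / (16 * b))) := by
  have := hind.isProbabilityMeasure
  have hint := integrable_exp_mul_sum_sq (u := δ / (8 * b)) hind hlaw fun j hj => by
    linarith [div_mul_le_one_div_four hb0 hb hδ2 j hj]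
  exact (measure_ge_le_exp_mul_mgf _ (by positivity) hint).trans
    (exp_mul_mgf_sum_sq_le hind hlaw hb0 hb hδ2)

theorem measureReal_sum_sq_le_one_sub_mul_le (hind : iIndepFun Z P)
    (hlaw : ∀ j, HasLaw (Z j) (gaussianReal 0 (v j)) P) (hb0 : 0 < b) (hb : ∀ j ∈ S, v j ≤ b)
    (hδ : 0 ≤ δ) :
    P.real {ω | ∑ j ∈ S, Z j ω ^ 2 ≤ (1 - δ) * ∑ j ∈ S, (v j : ℝ)} ≤
      Real.exp (-(δ ^ 2 * (∑ j ∈ S, (v j : ℝ)) / (16 * b))) := by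
  have := hind.isProbabilityMeasure
  have hint := integrable_exp_mul_sum_sq (u := -δ / (8 * b)) hind hlaw fun j hj => by
    linarith [div_mul_le_one_div_four hb0 hb (by linarith : -δ ≤ 2) j hj]
  rw [sub_eq_add_neg, ← neg_sq δ]
  exact (measure_le_le_exp_mul_mgf _
    (div_nonpos_of_nonpos_of_nonneg (neg_nonpos.2 hδ) (by positivity)) hint).trans
    (exp_mul_mgf_sum_sq_le hind hlaw hb0 hb (by linarith))

theorem measure_le_abs_sum_sq_sub_le (hind : iIndepFun Z P)
    (hlaw : ∀ j, HasLaw (Z j) (gaussianReal 0 (v j)) P) (hb0 : 0 < b) (hb : ∀ j ∈ S, v j ≤ b)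
    (hδ0 : 0 ≤ δ) (hδ2 : δ ≤ 2) :
    P {ω | δ * ∑ j ∈ S, (v j : ℝ) ≤ |∑ j ∈ S, Z j ω ^ 2 - ∑ j ∈ S, (v j : ℝ)|} ≤
      ENNReal.ofReal (2 * Real.exp (-(δ ^ 2 * (∑ j ∈ S, (v j : ℝ)) / (16 * b)))) := by
  have := hind.isProbabilityMeasure
  have hupper := measureReal_one_add_mul_le_sum_sq_le hind hlaw hb0 hb hδ0 hδ2
  have hlower := measureReal_sum_sq_le_one_sub_mul_le hind hlaw hb0 hb hδ0
  set r := ∑ j ∈ S, (v j : ℝ)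
  have hsub : {ω | δ * r ≤ |∑ j ∈ S, Z j ω ^ 2 - r|} ⊆
      {ω | (1 + δ) * r ≤ ∑ j ∈ S, Z j ω ^ 2} ∪ {ω | ∑ j ∈ S, Z j ω ^ 2 ≤ (1 - δ) * r} :=
    fun ω (hω : δ * r ≤ |∑ j ∈ S, Z j ω ^ 2 - r|) => (le_abs.1 hω).imp
      (fun h => show (1 + δ) * r ≤ ∑ j ∈ S, Z j ω ^ 2 by linarith)
      fun h => show ∑ j ∈ S, Z j ω ^ 2 ≤ (1 - δ) * r by linarith
  rw [← ofReal_measureReal]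
  refine ENNReal.ofReal_le_ofReal ?_
  exact (measureReal_mono hsub).trans ((measureReal_union_le _ _).trans (by linarith))

end IndependentSquares

end GaussianSquares

section GaussianMeasures

open scoped NNReal

theorem hasLaw_sum_smul_of_isGaussian {E Ω ι : Type*} [NormedAddCommGroup E] [NormedSpace ℝ E]
    [MeasurableSpace E] [BorelSpace E] [SecondCountableTopology E] [CompleteSpace E]
    [MeasurableSpace Ω] [Fintype ι] {P : Measure Ω} {μ : Measure E} [IsGaussian μ]
    (hμ : ∫ y, y ∂μ = 0) {Y : ι → Ω → E} (hind : iIndepFun Y P) (hlaw : ∀ i, HasLaw (Y i) μ P)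
    {x : ι → ℝ} (hx : ∑ i, x i ^ 2 = 1) : HasLaw (fun ω => ∑ i, x i • Y i ω) μ P := by
  have := hind.isProbabilityMeasure
  have hmeas : ∀ i, AEMeasurable (fun ω => x i • Y i ω) P := fun i => by fun_prop
  have hscaled : iIndepFun (fun i ω => x i • Y i ω) P :=
    hind.comp (fun i y => x i • y) fun i => by fun_prop
  have hchar : ∀ L : StrongDual ℝ E, charFunDual μ L = Complex.exp (-Var[L; μ] / 2) := fun L => by
    rw [IsGaussian.charFunDual_eq, integral_complex_ofReal, IsGaussian.integral_dual, hμ]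
    simp [neg_div]
  refine ⟨by fun_prop, Measure.ext_of_charFunDual ?_⟩
  rw [hscaled.charFunDual_map_fun_sum_eq_prod hmeas]
  ext L
  have hterm : ∀ i, charFunDual (P.map fun ω => x i • Y i ω) L =
      Complex.exp (x i ^ 2 * (-Var[L; μ] / 2)) := fun i => by
    have hmap : P.map (fun ω => x i • Y i ω) = μ.map (x i • ContinuousLinearMap.id ℝ E) := by
      rw [← (hlaw i).map_eq, AEMeasurable.map_map_of_aemeasurable (by fun_prop) (by fun_prop)]
      rfl
    have hcomp : L.comp (x i • ContinuousLinearMap.id ℝ E) = x i • L := by ext; simp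
    rw [hmap, charFunDual_map, hcomp, hchar, FunLike.coe_smul, variance_smul]
    push_cast
    ring_nf
  simp_rw [Finset.prod_apply, hterm, ← Complex.exp_sum, ← sum_mul, hchar]
  norm_cast
  rw [hx, one_mul]

instance isGaussian_pi {ι : Type*} [Fintype ι] {E : ι → Type*} [∀ i, NormedAddCommGroup (E i)]
    [∀ i, NormedSpace ℝ (E i)] [∀ i, MeasurableSpace (E i)] [∀ i, BorelSpace (E i)]
    [∀ i, SecondCountableTopology (E i)] [∀ i, CompleteSpace (E i)] {μ : ∀ i, Measure (E i)}
    [∀ i, IsGaussian (μ i)] : IsGaussian (Measure.pi μ) := by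
  have hind : iIndepFun (fun i (x : ∀ i, E i) => x i) (Measure.pi μ) :=
    iIndepFun_pi (X := fun _ => id) fun _ => aemeasurable_id
  have hlaw := hind.hasGaussianLaw fun i =>
    (measurePreserving_eval μ i).hasLaw.hasGaussianLaw
  simpa using hlaw.isGaussian_map

theorem integral_id_pi {ι : Type*} [Fintype ι] {μ : ι → Measure ℝ}
    [∀ i, IsProbabilityMeasure (μ i)] (hμ : ∀ i, Integrable id (μ i)) :
    ∫ y, y ∂(Measure.pi μ) = fun i => ∫ y, y ∂(μ i) := by
  ext i
  rw [eval_integral fun j => integrable_eval (hμ j), integral_eval]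

theorem map_mulVec_pi_gaussianReal {ι : Type*} [Fintype ι] [DecidableEq ι] {Q : Matrix ι ι ℝ}
    (hQ : Q ∈ orthogonalGroup ι ℝ) :
    (Measure.pi fun _ => gaussianReal 0 1).map (Q *ᵥ ·) =
      Measure.pi fun _ => gaussianReal 0 1 := by
  have hunit : toEuclideanCLM (𝕜 := ℝ) Q ∈
      unitary (EuclideanSpace ℝ ι →L[ℝ] EuclideanSpace ℝ ι) := Unitary.map_mem _ hQ
  have hmap : (ProbabilityTheory.stdGaussian (EuclideanSpace ℝ ι)).map
      (toEuclideanCLM (𝕜 := ℝ) Q) = ProbabilityTheory.stdGaussian (EuclideanSpace ℝ ι) :=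
    stdGaussian_map (Unitary.linearIsometryEquiv ⟨_, hunit⟩)
  apply (MeasurableEquiv.toLp 2 (ι → ℝ)).map_measurableEquiv_injective
  rw [MeasurableEquiv.coe_toLp, map_pi_eq_stdGaussian, ← hmap, ← map_pi_eq_stdGaussian,
    Measure.map_map (by fun_prop) (by fun_prop), Measure.map_map (by fun_prop) (by fun_prop)]
  rfl

theorem map_transpose_mulVec_mvGaussian {p : ℕ} (lam : ℕ → ℝ) {Q : Matrix (Fin p) (Fin p) ℝ}
    (hQ : Q ∈ orthogonalGroup (Fin p) ℝ) :
    (mvGaussian p lam Q).map (Qᵀ *ᵥ ·) =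
      Measure.pi fun j : Fin p => gaussianReal 0 (lam (j + 1)).toNNReal := by
  have hfactor : (fun g => Qᵀ *ᵥ covHalf p lam Q *ᵥ g) =
      (fun (g : Fin p → ℝ) (j : Fin p) => √(lam (j + 1)) * g j) ∘ (Qᵀ *ᵥ ·) := by
    ext g j
    have hcancel : Qᵀ * covHalf p lam Q = diagonal (fun i : Fin p => √(lam (i + 1))) * Qᵀ := by
      rw [covHalf, ← mul_assoc, ← mul_assoc, (mem_orthogonalGroup_iff' _ _).1 hQ, one_mul]
    rw [mulVec_mulVec, hcancel, ← mulVec_mulVec, mulVec_diagonal]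
    rfl
  have hvar : ∀ j : Fin p, (gaussianReal 0 1).map (√(lam (j + 1)) * ·) =
      gaussianReal 0 (lam (j + 1)).toNNReal := fun j => by
    rw [gaussianReal_map_const_mul, mul_zero, mul_one]
    congr 1
    exact NNReal.eq (by rw [NNReal.coe_mk, Real.sqrt, ← NNReal.coe_pow, NNReal.sq_sqrt])
  have hQt : Qᵀ ∈ orthogonalGroup (Fin p) ℝ := by
    rw [mem_orthogonalGroup_iff', transpose_transpose]; exact (mem_orthogonalGroup_iff _ _).1 hQ
  have hmul : ∀ M : Matrix (Fin p) (Fin p) ℝ, Measurable (M *ᵥ ·) := fun M => by fun_prop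
  rw [mvGaussian, _root_.stdGaussian, Measure.map_map (hmul _) (hmul _), Function.comp_def,
    hfactor, ← Measure.map_map (by fun_prop) (hmul _),
    map_mulVec_pi_gaussianReal hQt, Measure.pi_map_pi fun _ => by fun_prop]
  simp_rw [hvar]

end GaussianMeasures

section GaussianMatrices

open scoped NNReal

variable {Ω ι κ : Type*} [MeasurableSpace Ω] [Fintype ι] [Fintype κ] {P : Measure Ω}
  {Y : ι → Ω → κ → ℝ} {v : κ → ℝ≥0} {S : Finset κ} {b : ℝ}

theorem hasLaw_eval_and_iIndepFun_of_hasLaw_pi {𝓧 : κ → Type*} [∀ j, MeasurableSpace (𝓧 j)]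
    {ν : ∀ j, Measure (𝓧 j)} [∀ j, IsProbabilityMeasure (ν j)] {Z : Ω → ∀ j, 𝓧 j}
    (hZ : HasLaw Z (Measure.pi ν) P) :
    (∀ j, HasLaw (fun ω => Z ω j) (ν j) P) ∧ iIndepFun (fun j ω => Z ω j) P := by
  have : IsProbabilityMeasure P := hZ.isProbabilityMeasure
  have heval : ∀ j, HasLaw (fun ω => Z ω j) (ν j) P := fun j =>
    (measurePreserving_eval ν j).hasLaw.comp hZ
  exact ⟨heval, (iIndepFun_iff_hasLaw_pi_pi heval).2 hZ⟩

theorem hasLaw_sum_smul_of_pi_gaussianReal (hind : iIndepFun Y P)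
    (hlaw : ∀ i, HasLaw (Y i) (Measure.pi fun j => gaussianReal 0 (v j)) P)
    {x : ι → ℝ} (hx : ∑ i, x i ^ 2 = 1) :
    HasLaw (fun ω => ∑ i, x i • Y i ω) (Measure.pi fun j => gaussianReal 0 (v j)) P := by
  refine hasLaw_sum_smul_of_isGaussian ?_ hind hlaw hx
  rw [integral_id_pi fun j => memLp_one_iff_integrable.1 (memLp_id_gaussianReal 1)]
  exact funext fun j => integral_id_gaussianReal

theorem measure_half_le_abs_sum_sq_sub_le (hind : iIndepFun Y P)
    (hlaw : ∀ i, HasLaw (Y i) (Measure.pi fun j => gaussianReal 0 (v j)) P) (hb0 : 0 < b)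
    (hb : ∀ j ∈ S, v j ≤ b) {x : ι → ℝ} (hx : ∑ i, x i ^ 2 = 1) :
    P {ω | (∑ j ∈ S, (v j : ℝ)) / 2 ≤
        |∑ j ∈ S, (∑ i, x i • Y i ω) j ^ 2 - ∑ j ∈ S, (v j : ℝ)|} ≤
      ENNReal.ofReal (2 * Real.exp (-((∑ j ∈ S, (v j : ℝ)) / (64 * b)))) := by
  obtain ⟨heval, hcoord⟩ :=
    hasLaw_eval_and_iIndepFun_of_hasLaw_pi (hasLaw_sum_smul_of_pi_gaussianReal hind hlaw hx)
  convert! measure_le_abs_sum_sq_sub_le (δ := 1 / 2) hcoord heval hb0 hb (by norm_num)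
    (by norm_num) using 5
  · ring
  · field_simp
    ring

theorem nine_pow_mul_exp_le (n : ℕ) :
    (9 : ℝ) ^ n * (2 * Real.exp (-(4 * n))) ≤ 2 * Real.exp (-n) := by
  have h9 : (9 : ℝ) ≤ Real.exp 3 := by
    have he : (2.7 : ℝ) ≤ Real.exp 1 := by linarith [Real.exp_one_gt_d9]
    calc (9 : ℝ) ≤ 2.7 ^ 3 := by norm_num
      _ ≤ Real.exp 1 ^ 3 := by gcongr
      _ = Real.exp 3 := by rw [← Real.exp_nat_mul]; norm_num
  calc (9 : ℝ) ^ n * (2 * Real.exp (-(4 * n)))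
      ≤ Real.exp 3 ^ n * (2 * Real.exp (-(4 * n))) := by gcongr
    _ = 2 * Real.exp (-n) := by
        rw [← Real.exp_nat_mul, mul_left_comm, ← Real.exp_add]; ring_nf

theorem measure_exists_sqrt_sum_sq_lt_le (hind : iIndepFun Y P)
    (hlaw : ∀ i, HasLaw (Y i) (Measure.pi fun j => gaussianReal 0 (v j)) P) (hb0 : 0 < b)
    (hb : ∀ j ∈ S, v j ≤ b) (hr : 256 * Fintype.card ι * b ≤ ∑ j ∈ S, (v j : ℝ)) :
    P {ω | ∃ x : ι → ℝ, ∑ i, x i ^ 2 = 1 ∧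
        √(∑ j ∈ S, (∑ i, x i • Y i ω) j ^ 2) < √(∑ j ∈ S, (v j : ℝ)) / 4} ≤
      ENNReal.ofReal (2 * Real.exp (-Fintype.card ι)) := by
  set n := Fintype.card ι
  set r := ∑ j ∈ S, (v j : ℝ)
  have hpoint : ∀ x : ι → ℝ, ∑ i, x i ^ 2 = 1 →
      P {ω | r / 2 ≤ |∑ j ∈ S, (∑ i, x i • Y i ω) j ^ 2 - r|} ≤
        ENNReal.ofReal (2 * Real.exp (-(4 * n))) := fun x hx => by
    refine (measure_half_le_abs_sum_sq_sub_le hind hlaw hb0 hb hx).trans ?_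
    gcongr
    rw [le_div_iff₀ (by positivity)]
    linarith
  calc _ ≤ 9 ^ n * ENNReal.ofReal (2 * Real.exp (-(4 * n))) :=
        measure_exists_sqrt_sum_sq_lt_le_nine_pow_mul hpoint
    _ = ENNReal.ofReal (9 ^ n * (2 * Real.exp (-(4 * n)))) := by
        rw [ENNReal.ofReal_mul (p := 9 ^ n) (by positivity), ENNReal.ofReal_pow (by norm_num),
          ENNReal.ofReal_ofNat]
    _ ≤ ENNReal.ofReal (2 * Real.exp (-n)) := ENNReal.ofReal_le_ofReal (nine_pow_mul_exp_le n)

end GaussianMatrices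

section SmallestSingularValue

variable {n p : ℕ} {lam : ℕ → ℝ} {Q : Matrix (Fin p) (Fin p) ℝ}

theorem le_sminFn (hn : 0 < n) {M : Fin n → Fin p → ℝ} {a : ℝ}
    (h : ∀ x : Fin n → ℝ, enorm2 x = 1 → a ≤ enorm2 fun j => ∑ i, M i j * x i) : a ≤ sminFn M := by
  refine le_csInf ⟨_, Pi.single ⟨0, hn⟩ 1, ?_, rfl⟩ ?_
  · simp [enorm2, Pi.single_apply]
  · rintro _ ⟨x, hx, rfl⟩
    exact h x hx

theorem sqrt_sum_sq_transpose_mulVec_le (hQ : Q ∈ orthogonalGroup (Fin p) ℝ) (u : Fin p → ℝ)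
    (S : Finset (Fin p)) : √(∑ j ∈ S, (Qᵀ *ᵥ u) j ^ 2) ≤ enorm2 u := by
  have hnorm : (Qᵀ *ᵥ u) ⬝ᵥ (Qᵀ *ᵥ u) = u ⬝ᵥ u := by
    rw [dotProduct_mulVec, vecMul_mulVec, transpose_transpose, (mem_orthogonalGroup_iff _ _).1 hQ,
      vecMul_one]
  refine Real.sqrt_le_sqrt ?_
  calc ∑ j ∈ S, (Qᵀ *ᵥ u) j ^ 2 ≤ ∑ j, (Qᵀ *ᵥ u) j ^ 2 :=
        sum_le_univ_sum_of_nonneg fun j => sq_nonneg _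
    _ = ∑ j, u j ^ 2 := by simpa only [dotProduct, pow_two] using hnorm

theorem sqrt_sum_sq_sum_smul_transpose_mulVec_le (hQ : Q ∈ orthogonalGroup (Fin p) ℝ)
    (M : Fin n → Fin p → ℝ) (x : Fin n → ℝ) (S : Finset (Fin p)) :
    √(∑ j ∈ S, (∑ i, x i • Qᵀ *ᵥ M i) j ^ 2) ≤ enorm2 fun j => ∑ i, M i j * x i := by
  have hcomb : ∑ i, x i • Qᵀ *ᵥ M i = Qᵀ *ᵥ fun j => ∑ i, M i j * x i := by
    simp_rw [← mulVec_smul, ← mulVec_sum]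
    congr 1
    ext j
    simp [mul_comm]
  rw [hcomb]
  exact sqrt_sum_sq_transpose_mulVec_le hQ _ S

theorem sum_filter_le_succ_eq_rsum (lam : ℕ → ℝ) {k : ℕ} (hk : 1 ≤ k) :
    ∑ j ∈ univ.filter fun j : Fin p => k ≤ (j : ℕ) + 1, lam ((j : ℕ) + 1) = rsum p lam k :=
  sum_bij' (fun j _ => (j : ℕ) + 1) (fun i hi => ⟨i - 1, by grind⟩) (by grind) (by grind) (by grind)
    (by grind) (by grind)

instance isProbabilityMeasure_mvGaussian : IsProbabilityMeasure (mvGaussian p lam Q) := by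
  have : IsProbabilityMeasure (_root_.stdGaussian p) := by
    unfold _root_.stdGaussian
    infer_instance
  exact Measure.isProbabilityMeasure_map (Continuous.aemeasurable (by fun_prop))

theorem pos_and_mul_le_rsum_of_mem_kstarSet {c0 : ℝ} (hc0 : 0 < c0) (hn : 0 < n) {k : ℕ}
    (hlam : 0 ≤ lam k) (hk : k ∈ kstarSet p lam c0 n) :
    0 < lam k ∧ c0 * n * lam k ≤ rsum p lam k := by
  obtain ⟨-, -, hratio⟩ := hk
  have hpos : 0 < lam k := hlam.lt_of_ne' fun h0 => by
    rw [h0, div_zero] at hratio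
    exact hratio.not_gt (by positivity)
  exact ⟨hpos, (le_div_iff₀ hpos).1 hratio⟩

theorem measure_exists_enorm2_lt_le {Ω : Type*} [MeasurableSpace Ω] {P : Measure Ω}
    {X : Ω → Fin n → Fin p → ℝ} (hQ : Q ∈ orthogonalGroup (Fin p) ℝ)
    (hX : HasLaw X (Measure.pi fun _ => mvGaussian p lam Q) P) {k : ℕ} (hk : 1 ≤ k)
    (hpos : 0 < lam k) (hlam0 : ∀ j, k ≤ j → j ≤ p → 0 ≤ lam j)
    (hle : ∀ j, k ≤ j → j ≤ p → lam j ≤ lam k) (hr : 256 * n * lam k ≤ rsum p lam k) :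
    P {ω | ∃ x : Fin n → ℝ, enorm2 x = 1 ∧
        enorm2 (fun j => ∑ i, X ω i j * x i) < √(rsum p lam k) / 4} ≤
      ENNReal.ofReal (2 * Real.exp (-n)) := by
  obtain ⟨hrow, hind⟩ := hasLaw_eval_and_iIndepFun_of_hasLaw_pi hX
  have hmeas : Measurable fun u : Fin p → ℝ => Qᵀ *ᵥ u := Continuous.measurable (by fun_prop)
  let S := univ.filter fun j : Fin p => k ≤ (j : ℕ) + 1
  have hsum : ∑ j ∈ S, ((lam ((j : ℕ) + 1)).toNNReal : ℝ) = rsum p lam k := by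
    rw [← sum_filter_le_succ_eq_rsum lam hk]
    exact sum_congr rfl fun j hj =>
      Real.coe_toNNReal _ (hlam0 _ ((mem_filter_univ j).1 hj) j.isLt)
  have hb : ∀ j ∈ S, ((lam ((j : ℕ) + 1)).toNNReal : ℝ) ≤ lam k := fun j hj => by
    rw [Real.coe_toNNReal', max_le_iff]
    exact ⟨hle _ ((mem_filter_univ j).1 hj) j.isLt, hpos.le⟩
  have htail := measure_exists_sqrt_sum_sq_lt_le (Y := fun i ω => Qᵀ *ᵥ X ω i)
    (hind.comp (fun _ u => Qᵀ *ᵥ u) fun _ => hmeas)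
    (fun i => (HasLaw.mk hmeas.aemeasurable (map_transpose_mulVec_mvGaussian lam hQ)).comp (hrow i))
    hpos hb (by rwa [hsum, Fintype.card_fin])
  rw [hsum, Fintype.card_fin] at htail
  refine (measure_mono ?_).trans htail
  rintro ω ⟨x, hx, hlt⟩
  exact ⟨x, Real.sqrt_eq_one.1 hx,
    (sqrt_sum_sq_sum_smul_transpose_mulVec_le hQ (X ω) x S).trans_lt hlt⟩

end SmallestSingularValue

/-- Lemma 2: there is an absolute constant `c > 0` such that, if the
constant `c₀` in the definition of `k*` satisfies `c₀ ≥ c`, then for a random `n × p`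
matrix `X` (`p ≥ n`) with i.i.d. `N(0,Σ)` rows, `Σ` of rank at least `n`, with
probability at least `1 - 2e^{-n}` one has `σ_n(X) ≥ √(r_{k*}(Σ))/4`. -/
theorem stmt6 :
    ∃ c > (0 : ℝ), ∀ c0 : ℝ, c ≤ c0 →
    ∀ (n p : ℕ), 0 < n → n ≤ p →
    ∀ (lam : ℕ → ℝ) (Porth Sig : Matrix (Fin p) (Fin p) ℝ),
      (∀ k, 1 ≤ k → k ≤ p → 0 ≤ lam k) →
      (∀ j k, 1 ≤ j → j ≤ k → k ≤ p → lam k ≤ lam j) →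
      Porth * Porthᵀ = 1 →
      Sig = Porth * Matrix.diagonal (fun i : Fin p => lam ((i : ℕ) + 1)) * Porthᵀ →
      n ≤ Sig.rank →
    ∀ (Ω : Type) (_ : MeasurableSpace Ω) (P : Measure Ω), IsProbabilityMeasure P →
    ∀ (X : Ω → Fin n → Fin p → ℝ),
      Measure.map X P = (Measure.pi fun _ : Fin n => mvGaussian p lam Porth) →
      (kstarSet p lam c0 n).Nonempty →
      ENNReal.ofReal (1 - 2 * Real.exp (-(n : ℝ))) ≤
        P {ω | Real.sqrt (rsum p lam (kstar p lam c0 n)) / 4 ≤ sminFn (X ω)} := by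
  refine ⟨256, by norm_num, ?_⟩
  intro c0 hc0 n p hn _ lam Q _ hlam hmono hQ _ _ Ω _ P _ X hX hne
  have hmem : kstar p lam c0 n ∈ kstarSet p lam c0 n := Nat.sInf_mem hne
  obtain ⟨hpos, hmul⟩ :=
    pos_and_mul_le_rsum_of_mem_kstarSet (by linarith) hn (hlam _ hmem.1 hmem.2.1) hmem
  set k := kstar p lam c0 n
  have hlaw : HasLaw X (Measure.pi fun _ => mvGaussian p lam Q) P :=
    ⟨.of_map_ne_zero (hX ▸ IsProbabilityMeasure.ne_zero _), hX⟩
  have hbad := measure_exists_enorm2_lt_le ((mem_orthogonalGroup_iff _ _).2 hQ) hlaw hmem.1 hpos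
    (fun j hkj => hlam j (hmem.1.trans hkj)) (fun j => hmono k j hmem.1)
    (le_trans (by gcongr) hmul)
  calc ENNReal.ofReal (1 - 2 * Real.exp (-(n : ℝ)))
      = 1 - ENNReal.ofReal (2 * Real.exp (-n)) := by
        rw [ENNReal.ofReal_sub _ (by positivity), ENNReal.ofReal_one]
    _ ≤ P Set.univ - P {ω | ∃ x : Fin n → ℝ, enorm2 x = 1 ∧
          enorm2 (fun j => ∑ i, X ω i j * x i) < √(rsum p lam k) / 4} := by
        rw [measure_univ]; exact tsub_le_tsub_left hbad _
    _ ≤ P (Set.univ \ _) := le_measure_sdiff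
    _ ≤ P {ω | √(rsum p lam k) / 4 ≤ sminFn (X ω)} := measure_mono fun ω hω =>
        le_sminFn hn fun x hx => not_lt.1 fun hlt => hω.2 ⟨x, hx, hlt⟩
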